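/- arXiv:1909.00495 — 4 statements merged into one kernel-verified Lean document; each statement's English description precedes it below -/
import Mathlib

section
/- Let n ≥ 2 and 1 ≤ d ≤ n−1 be integers, s ∈ ℝ, and let w be a weight such that there exists C_w > 0 with Σ_{A∈Ω_k} w(k,A)² ≤ C_w² for every k ∈ ℤ^n. Then the d-plane Radon transform R_d : H^s(𝕋^n) → L_s^{2,2}(X_{d,n};w) has an adjoint R_d^* whose Fourier coefficients are given by (R_d^* g)^(k) = Σ_{A∈Ω_k} w(k,A)² ĝ(k,A); that is, for all f ∈ H^s(𝕋^n) and g ∈ L_s^{2,2}(X_{d,n};w) one has (R_d f, g)_{L_s^{2,2}(X_{d,n};w)} = Σ_{k∈ℤ^n} ⟨k⟩^{2s} f̂(k) · conj(Σ_{A∈Ω_k} w(k,A)² ĝ(k,A)), with all series absolutely convergent. -/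
/-!
Setting: the flat torus 𝕋ⁿ = ℝⁿ/ℤⁿ and its d-plane Radon transform.

* Periodic distributions 𝒯' are modeled, via the structure theorem, by their
  Fourier coefficient sequences `ℤⁿ → ℂ` of at most polynomial growth (`PDist`).
* `Gr d n` is the Grassmannian of d-dimensional subspaces of ℚⁿ.
* The d-plane Radon transform is encoded on the Fourier side by the Fourier
  slice identity `(R_{d,A} f)^(k) = f̂(k)` if `k ⊥ A` and `0` otherwise (`radonC`).
* `hsNormSq s c = Σ_k ⟨k⟩^{2s} |c k|²` is the squared H^s(𝕋ⁿ) norm (in ℝ≥0∞),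
  `dataNormSq s w g = Σ_A Σ_k ⟨k⟩^{2s} w(k,A)² |ĝ(k,A)|²` is the squared
  L_s^{2,2}(X_{d,n}; w) norm, `hsNorm`/`dataNorm` are their square roots.
* `Wk w k = Σ_{A ∈ Ω_k} w(k,A)²` and `radonStar` is the adjoint
  `(R_d^* g)^(k) = Σ_{A ∈ Ω_k} w(k,A)² ĝ(k,A)`.
-/

open scoped ENNReal BigOperators
open MeasureTheory Classical Filter

noncomputable section

abbrev Zn (n : ℕ) := Fin n → ℤ
abbrev Tn (n : ℕ) := Fin n → AddCircle (1 : ℝ)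

/-- Japanese bracket ⟨k⟩ = (1+|k|²)^{1/2}. -/
def jap {n : ℕ} (k : Zn n) : ℝ := Real.sqrt (1 + ∑ i, ((k i : ℝ))^2)

/-- Periodic distributions on 𝕋ⁿ, modeled via their Fourier coefficients
(structure theorem: 𝒯' ≅ sequences of at most polynomial growth). -/
structure PDist (n : ℕ) where
  coef : Zn n → ℂ
  growth : ∃ C N : ℝ, 0 < C ∧ ∀ k, ‖coef k‖ ≤ C * jap k ^ N

/-- Grassmannian of d-dimensional subspaces of ℚⁿ. -/
def Gr (d n : ℕ) := {A : Submodule ℚ (Fin n → ℚ) // Module.finrank ℚ A = d}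

/-- `k ⊥ A`. -/
def perp {d n : ℕ} (k : Zn n) (A : Gr d n) : Prop :=
  ∀ v ∈ A.1, ∑ i, (k i : ℚ) * v i = 0

/-- A weight `w : ℤⁿ × Gr(d,n) → (0,∞)` with at most polynomial decay in each
variable `A`. -/
def IsWeight {d n : ℕ} (w : Zn n → Gr d n → ℝ) : Prop :=
  (∀ k A, 0 < w k A) ∧ ∀ A : Gr d n, ∃ C N : ℝ, 0 < C ∧ ∀ k, C * jap k ^ (-N) ≤ w k A

/-- Fourier-slice definition of the d-plane Radon transform `R_{d,A}`
on Fourier coefficient sequences. -/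
def radonC {d n : ℕ} (A : Gr d n) (c : Zn n → ℂ) : Zn n → ℂ :=
  fun k => if perp k A then c k else 0

/-- The d-plane Radon transform `R_{d,A}` on periodic distributions. -/
def radonD {d n : ℕ} (A : Gr d n) (f : PDist n) : PDist n :=
  ⟨radonC A f.coef, by
    obtain ⟨C, N, hC, h⟩ := f.growth
    refine ⟨C, N, hC, fun k => ?_⟩
    by_cases hk : perp k A
    · simpa [radonC, hk] using h k
    · simp only [radonC, hk, if_false, norm_zero]
      have h1 : 0 ≤ jap k ^ N := Real.rpow_nonneg (Real.sqrt_nonneg _) N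
      positivity⟩

/-- Squared H^s(𝕋ⁿ) norm `Σ_k ⟨k⟩^{2s}|c k|²` (possibly infinite). -/
def hsNormSq {n : ℕ} (s : ℝ) (c : Zn n → ℂ) : ℝ≥0∞ :=
  ∑' k : Zn n, ENNReal.ofReal (jap k ^ (2*s) * ‖c k‖^2)

/-- H^s(𝕋ⁿ) norm (possibly infinite). -/
def hsNorm {n : ℕ} (s : ℝ) (c : Zn n → ℂ) : ℝ≥0∞ := hsNormSq s c ^ (1/2 : ℝ)

/-- Squared L_s^{2,2}(X_{d,n}; w) norm (possibly infinite). -/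
def dataNormSq {d n : ℕ} (s : ℝ) (w : Zn n → Gr d n → ℝ) (g : Gr d n → Zn n → ℂ) : ℝ≥0∞ :=
  ∑' A : Gr d n, ∑' k : Zn n, ENNReal.ofReal (jap k ^ (2*s) * (w k A)^2 * ‖g A k‖^2)

/-- L_s^{2,2}(X_{d,n}; w) norm (possibly infinite). -/
def dataNorm {d n : ℕ} (s : ℝ) (w : Zn n → Gr d n → ℝ) (g : Gr d n → Zn n → ℂ) : ℝ≥0∞ :=
  dataNormSq s w g ^ (1/2 : ℝ)

/-- `W_k = Σ_{A ∈ Ω_k} w(k,A)²`. -/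
def Wk {d n : ℕ} (w : Zn n → Gr d n → ℝ) (k : Zn n) : ℝ :=
  ∑' A : {A : Gr d n // perp k A}, (w k A.1)^2

/-- The adjoint `R_d^*`: `(R_d^* g)^(k) = Σ_{A ∈ Ω_k} w(k,A)² ĝ(k,A)`. -/
def radonStar {d n : ℕ} (w : Zn n → Gr d n → ℝ) (g : Gr d n → Zn n → ℂ) : Zn n → ℂ :=
  fun k => ∑' A : {A : Gr d n // perp k A}, ((w k A.1 : ℝ) : ℂ)^2 * g A.1 k

/-!
Summing over `A` first, the slice identity gives `‖R_d f‖² = Σ_k ⟨k⟩^{2s} |f̂(k)|² W_k`, so a bound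
on `W_k` makes `R_d` bounded from `H^s` to `L_s^{2,2}`. The pairing of `R_d f` with `g` therefore
converges absolutely, and exchanging its two summations leaves, at each frequency `k`, a sum over
`Ω_k` only.
-/

theorem summable_of_tsum_ofReal_lt_top {α : Type*} {u : α → ℝ} (hu : ∀ a, 0 ≤ u a)
    (h : ∑' a, ENNReal.ofReal (u a) < ∞) : Summable u :=
  (ENNReal.summable_toReal h.ne).congr fun a => ENNReal.toReal_ofReal (hu a)

theorem tsum_subtype_eq_tsum_ite {α M : Type*} [AddCommMonoid M] [TopologicalSpace M]
    (p : α → Prop) [DecidablePred p] (u : α → M) :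
    ∑' a : {a // p a}, u a = ∑' a, if p a then u a else 0 :=
  (tsum_subtype {a | p a} u).trans <| tsum_congr fun _ => Set.indicator_apply _ _ _

theorem summable_weight_mul_mul_of_sq {α : Type*} {m x y : α → ℝ} (hm : ∀ a, 0 ≤ m a)
    (hx : Summable fun a => m a * x a ^ 2) (hy : Summable fun a => m a * y a ^ 2) :
    Summable fun a => m a * x a * y a := by
  refine .of_norm_bounded (hx.add hy) fun a => ?_
  have abs_mul_le : |x a * y a| ≤ x a ^ 2 + y a ^ 2 := by
    rw [abs_mul, ← sq_abs (x a), ← sq_abs (y a)]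
    nlinarith [sq_nonneg (|x a| - |y a|), sq_nonneg (|x a|), sq_nonneg (|y a|)]
  calc ‖m a * x a * y a‖ = m a * |x a * y a| := by
        rw [mul_assoc, Real.norm_eq_abs, abs_mul, abs_of_nonneg (hm a)]
    _ ≤ m a * (x a ^ 2 + y a ^ 2) := mul_le_mul_of_nonneg_left abs_mul_le (hm a)
    _ = m a * x a ^ 2 + m a * y a ^ 2 := mul_add _ _ _

theorem jap_pos {n : ℕ} (k : Zn n) : 0 < jap k :=
  Real.sqrt_pos.mpr (by positivity)

theorem jap_rpow_pos {n : ℕ} (k : Zn n) (r : ℝ) : 0 < jap k ^ r :=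
  Real.rpow_pos_of_pos (jap_pos k) r

section Radon

variable {n d : ℕ} {s : ℝ} {w : Zn n → Gr d n → ℝ} {g h : Gr d n → Zn n → ℂ}

theorem jap_rpow_mul_sq_nonneg (s : ℝ) (w : Zn n → Gr d n → ℝ) (k : Zn n) (A : Gr d n) :
    0 ≤ jap k ^ (2 * s) * w k A ^ 2 :=
  mul_nonneg (jap_rpow_pos k _).le (sq_nonneg _)

theorem summable_of_dataNormSq_lt_top (hg : dataNormSq s w g < ∞) :
    Summable fun P : Gr d n × Zn n =>
      jap P.2 ^ (2 * s) * w P.2 P.1 ^ 2 * ‖g P.1 P.2‖ ^ 2 := by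
  refine summable_of_tsum_ofReal_lt_top
    (fun P => mul_nonneg (jap_rpow_mul_sq_nonneg s w P.2 P.1) (sq_nonneg _)) ?_
  rw [ENNReal.tsum_prod']
  exact hg

theorem summable_norm_mul_norm_of_dataNormSq_lt_top (hh : dataNormSq s w h < ∞)
    (hg : dataNormSq s w g < ∞) :
    Summable fun P : Gr d n × Zn n =>
      jap P.2 ^ (2 * s) * w P.2 P.1 ^ 2 * ‖h P.1 P.2‖ * ‖g P.1 P.2‖ :=
  summable_weight_mul_mul_of_sq (fun P => jap_rpow_mul_sq_nonneg s w P.2 P.1)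
    (summable_of_dataNormSq_lt_top hh) (summable_of_dataNormSq_lt_top hg)

theorem summable_mul_star_of_dataNormSq_lt_top (hh : dataNormSq s w h < ∞)
    (hg : dataNormSq s w g < ∞) :
    Summable fun P : Gr d n × Zn n =>
      ((jap P.2 ^ (2 * s) * w P.2 P.1 ^ 2 : ℝ) : ℂ) * h P.1 P.2 * star (g P.1 P.2) := by
  refine .of_norm ((summable_norm_mul_norm_of_dataNormSq_lt_top hh hg).congr fun P => ?_)
  rw [norm_mul, norm_mul, norm_star,
    Complex.norm_of_nonneg (jap_rpow_mul_sq_nonneg s w P.2 P.1)]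

theorem summable_sq_mul_sq_norm_of_dataNormSq_lt_top (hg : dataNormSq s w g < ∞) (k : Zn n) :
    Summable fun A : Gr d n => w k A ^ 2 * ‖g A k‖ ^ 2 := by
  have slice : Summable fun A : Gr d n => jap k ^ (2 * s) * (w k A ^ 2 * ‖g A k‖ ^ 2) :=
    ((summable_of_dataNormSq_lt_top hg).prod_symm.prod_factor k).congr fun A => mul_assoc _ _ _
  exact (summable_mul_left_iff (jap_rpow_pos k _).ne').mp slice

theorem summable_sq_mul_norm_of_dataNormSq_lt_top (hg : dataNormSq s w g < ∞) {k : Zn n}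
    (hW : Summable fun A : {A : Gr d n // perp k A} => w k A.1 ^ 2) :
    Summable fun A : {A : Gr d n // perp k A} => w k A.1 ^ 2 * ‖g A.1 k‖ := by
  have hgk : Summable fun A : {A : Gr d n // perp k A} => w k A.1 ^ 2 * ‖g A.1 k‖ ^ 2 :=
    (summable_sq_mul_sq_norm_of_dataNormSq_lt_top hg k).comp_injective Subtype.val_injective
  simpa only [mul_one] using summable_weight_mul_mul_of_sq
    (m := fun A : {A : Gr d n // perp k A} => w k A.1 ^ 2) (x := fun _ => 1)
    (y := fun A => ‖g A.1 k‖) (fun A => sq_nonneg _) (by simpa only [one_pow, mul_one] using hW) hgk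

theorem tsum_ofReal_sq_norm_radonC {k : Zn n}
    (hW : Summable fun A : {A : Gr d n // perp k A} => w k A.1 ^ 2) (c : Zn n → ℂ) :
    ∑' A : Gr d n, ENNReal.ofReal (jap k ^ (2 * s) * w k A ^ 2 * ‖radonC A c k‖ ^ 2) =
      ENNReal.ofReal (Wk w k) * ENNReal.ofReal (jap k ^ (2 * s) * ‖c k‖ ^ 2) := by
  rw [Wk, ENNReal.ofReal_tsum_of_nonneg (fun A => sq_nonneg _) hW,
    tsum_subtype_eq_tsum_ite (perp k) fun A => ENNReal.ofReal (w k A ^ 2),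
    ← ENNReal.tsum_mul_right]
  refine tsum_congr fun A => ?_
  by_cases hA : perp k A
  · rw [radonC, if_pos hA, if_pos hA, ← ENNReal.ofReal_mul (sq_nonneg _)]
    congr 1
    ring
  · simp [radonC, hA]

theorem dataNormSq_radonC_le
    (hWsum : ∀ k : Zn n, Summable fun A : {A : Gr d n // perp k A} => w k A.1 ^ 2)
    {C : ℝ} (hWle : ∀ k : Zn n, Wk w k ≤ C) (c : Zn n → ℂ) :
    dataNormSq s w (fun A => radonC A c) ≤ ENNReal.ofReal C * hsNormSq s c :=
  calc dataNormSq s w (fun A => radonC A c)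
      = ∑' k : Zn n, ENNReal.ofReal (Wk w k) * ENNReal.ofReal (jap k ^ (2 * s) * ‖c k‖ ^ 2) := by
        rw [dataNormSq, ENNReal.tsum_comm]
        exact tsum_congr fun k => tsum_ofReal_sq_norm_radonC (hWsum k) c
    _ ≤ ∑' k : Zn n, ENNReal.ofReal C * ENNReal.ofReal (jap k ^ (2 * s) * ‖c k‖ ^ 2) :=
        ENNReal.tsum_le_tsum fun k => by gcongr; exact hWle k
    _ = ENNReal.ofReal C * hsNormSq s c := ENNReal.tsum_mul_left

theorem tsum_radonC_mul_star (s : ℝ) (w : Zn n → Gr d n → ℝ) (c : Zn n → ℂ)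
    (g : Gr d n → Zn n → ℂ) (k : Zn n) :
    ∑' A : Gr d n, ((jap k ^ (2 * s) * w k A ^ 2 : ℝ) : ℂ) * radonC A c k * star (g A k) =
      ((jap k ^ (2 * s) : ℝ) : ℂ) * c k * star (radonStar w g k) := by
  rw [radonStar, tsum_subtype_eq_tsum_ite (perp k) fun A => (w k A : ℂ) ^ 2 * g A k, tsum_star,
    ← tsum_mul_left]
  refine tsum_congr fun A => ?_
  by_cases hA : perp k A
  · simp only [radonC, hA, if_true, star_mul', star_pow, Complex.star_def, Complex.conj_ofReal]
    push_cast
    ring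
  · simp [radonC, hA]

theorem tsum_radonC_mul_star_eq_tsum_mul_star_radonStar {c : Zn n → ℂ}
    (hc : dataNormSq s w (fun A => radonC A c) < ∞) (hg : dataNormSq s w g < ∞) :
    (∑' A : Gr d n, ∑' k : Zn n,
        ((jap k ^ (2 * s) * w k A ^ 2 : ℝ) : ℂ) * radonC A c k * star (g A k)) =
      ∑' k : Zn n, ((jap k ^ (2 * s) : ℝ) : ℂ) * c k * star (radonStar w g k) := by
  have hsum := summable_mul_star_of_dataNormSq_lt_top hc hg
  rw [← Summable.tsum_comm (f := fun A k =>
    ((jap k ^ (2 * s) * w k A ^ 2 : ℝ) : ℂ) * radonC A c k * star (g A k)) hsum]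
  exact tsum_congr fun k => tsum_radonC_mul_star s w c g k

theorem statement0_general (s : ℝ) (w : Zn n → Gr d n → ℝ)
    (hWsum : ∀ k : Zn n, Summable fun A : {A : Gr d n // perp k A} => w k A.1 ^ 2)
    {C : ℝ} (hWle : ∀ k : Zn n, Wk w k ≤ C)
    (c : Zn n → ℂ) (hc : hsNormSq s c < ∞)
    (g : Gr d n → Zn n → ℂ) (hg : dataNormSq s w g < ∞) :
    (∀ k : Zn n, Summable fun A : {A : Gr d n // perp k A} => w k A.1 ^ 2 * ‖g A.1 k‖) ∧
    (Summable fun P : Gr d n × Zn n =>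
      jap P.2 ^ (2 * s) * w P.2 P.1 ^ 2 * ‖radonC P.1 c P.2‖ * ‖g P.1 P.2‖) ∧
    (∑' A : Gr d n, ∑' k : Zn n,
        ((jap k ^ (2 * s) * w k A ^ 2 : ℝ) : ℂ) * radonC A c k * star (g A k)) =
      ∑' k : Zn n, ((jap k ^ (2 * s) : ℝ) : ℂ) * c k * star (radonStar w g k) := by
  have hRc : dataNormSq s w (fun A => radonC A c) < ∞ :=
    (dataNormSq_radonC_le hWsum hWle c).trans_lt (ENNReal.mul_lt_top ENNReal.ofReal_lt_top hc)
  exact ⟨fun k => summable_sq_mul_norm_of_dataNormSq_lt_top hg (hWsum k),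
    summable_norm_mul_norm_of_dataNormSq_lt_top (h := fun A => radonC A c) hRc hg,
    tsum_radonC_mul_star_eq_tsum_mul_star_radonStar hRc hg⟩

end Radon

/-- Adjoint of the d-plane Radon transform.
If `Σ_{A∈Ω_k} w(k,A)² ≤ C_w²` for all `k`, then for `f ∈ H^s(𝕋ⁿ)` and
`g ∈ L_s^{2,2}(X_{d,n}; w)` the inner product `(R_d f, g)_{L_s^{2,2}}` equals
`Σ_k ⟨k⟩^{2s} f̂(k) conj(Σ_{A∈Ω_k} w(k,A)² ĝ(k,A))`, all series being
absolutely convergent; i.e. the adjoint `R_d^*` has Fourier coefficients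
`(R_d^* g)^(k) = Σ_{A∈Ω_k} w(k,A)² ĝ(k,A)`. -/
theorem statement0 {n d : ℕ} (hn : 2 ≤ n) (hd1 : 1 ≤ d) (hd2 : d ≤ n - 1)
    (s : ℝ) (w : Zn n → Gr d n → ℝ) (hw : IsWeight w) (Cw : ℝ) (hCw : 0 < Cw)
    (hWsum : ∀ k : Zn n, Summable (fun A : {A : Gr d n // perp k A} => (w k A.1) ^ 2))
    (hWle : ∀ k : Zn n, Wk w k ≤ Cw ^ 2)
    (f : PDist n) (hf : hsNormSq s f.coef < ∞)
    (g : Gr d n → PDist n) (hg : dataNormSq s w (fun A => (g A).coef) < ∞) :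
    (∀ k : Zn n,
      Summable (fun A : {A : Gr d n // perp k A} => (w k A.1) ^ 2 * ‖(g A.1).coef k‖)) ∧
    Summable (fun P : Gr d n × Zn n =>
      jap P.2 ^ (2*s) * (w P.2 P.1) ^ 2 * ‖radonC P.1 f.coef P.2‖ * ‖(g P.1).coef P.2‖) ∧
    (∑' A : Gr d n, ∑' k : Zn n,
        ((jap k ^ (2*s) * (w k A) ^ 2 : ℝ) : ℂ) * radonC A f.coef k * star ((g A).coef k))
      = ∑' k : Zn n, ((jap k ^ (2*s) : ℝ) : ℂ) * f.coef k *
          star (∑' A : {A : Gr d n // perp k A}, ((w k A.1 : ℝ) : ℂ) ^ 2 * (g A.1).coef k) :=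
  statement0_general s w hWsum hWle f.coef hf (fun A => (g A).coef) hg
end
end

section
/- Let n ≥ 2 and 1 ≤ d ≤ n−1 be integers, s ∈ ℝ, and let w be a weight such that there exists C_w > 0 with W_k = Σ_{A∈Ω_k} w(k,A)² ≤ C_w² for every k ∈ ℤ^n. Then the normal operator R_d^* R_d : H^s(𝕋^n) → H^s(𝕋^n) is the Fourier multiplier associated with (W_k)_{k∈ℤ^n}, i.e. (R_d^* R_d f)^(k) = W_k f̂(k) for all f ∈ H^s(𝕋^n) and k ∈ ℤ^n. In particular, the operator F_{W_k^{−1}} ∘ R_d^* is a left inverse of R_d: it maps R_d f back to f for every periodic distribution f ∈ 𝒯'. -/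
/-!
Setting: the flat torus 𝕋ⁿ = ℝⁿ/ℤⁿ and its d-plane Radon transform.

* Periodic distributions 𝒯' are modeled, via the structure theorem, by their
  Fourier coefficient sequences `ℤⁿ → ℂ` of at most polynomial growth (`PDist`).
* `Gr d n` is the Grassmannian of d-dimensional subspaces of ℚⁿ.
* The d-plane Radon transform is encoded on the Fourier side by the Fourier
  slice identity `(R_{d,A} f)^(k) = f̂(k)` if `k ⊥ A` and `0` otherwise (`radonC`).
* `hsNormSq s c = Σ_k ⟨k⟩^{2s} |c k|²` is the squared H^s(𝕋ⁿ) norm (in ℝ≥0∞),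
  `dataNormSq s w g = Σ_A Σ_k ⟨k⟩^{2s} w(k,A)² |ĝ(k,A)|²` is the squared
  L_s^{2,2}(X_{d,n}; w) norm, `hsNorm`/`dataNorm` are their square roots.
* `Wk w k = Σ_{A ∈ Ω_k} w(k,A)²` and `radonStar` is the adjoint
  `(R_d^* g)^(k) = Σ_{A ∈ Ω_k} w(k,A)² ĝ(k,A)`.
-/

open scoped ENNReal BigOperators
open MeasureTheory Classical Filter

noncomputable section

theorem exists_submodule_le_finrank_eq {R M : Type*} [Ring R] [StrongRankCondition R]
    [AddCommGroup M] [Module R M] (p : Submodule R M) {d : ℕ} (hd : d ≤ Module.finrank R p) :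
    ∃ q ≤ p, Module.finrank R q = d := by
  have : Nontrivial R := nontrivial_of_invariantBasisNumber R
  obtain ⟨v, hv⟩ := exists_linearIndependent_of_le_finrank hd
  refine ⟨Submodule.span R (Set.range (p.subtype ∘ v)), ?_, ?_⟩
  · rw [Submodule.span_le]
    rintro _ ⟨i, rfl⟩
    exact (v i).2
  · simpa using finrank_span_eq_card (hv.map' p.subtype p.ker_subtype)

theorem finrank_sub_one_le_finrank_ker {K V : Type*} [DivisionRing K] [AddCommGroup V]
    [Module K V] [FiniteDimensional K V] (φ : V →ₗ[K] K) :
    Module.finrank K V - 1 ≤ Module.finrank K (LinearMap.ker φ) := by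
  have rank_nullity := LinearMap.finrank_range_add_finrank_ker φ
  have range_le_one : Module.finrank K (LinearMap.range φ) ≤ 1 := by
    simpa using Submodule.finrank_le (LinearMap.range φ)
  omega

section Radon

variable {n d : ℕ} {w : Zn n → Gr d n → ℝ} {k : Zn n}

theorem exists_perp (hd : d ≤ n - 1) (k : Zn n) : ∃ A : Gr d n, perp k A := by
  let φ : (Fin n → ℚ) →ₗ[ℚ] ℚ := dotProductBilin ℚ ℚ fun i => (k i : ℚ)
  have d_le : d ≤ Module.finrank ℚ (LinearMap.ker φ) :=
    hd.trans (by simpa using finrank_sub_one_le_finrank_ker φ)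
  obtain ⟨A, A_le, finrank_A⟩ := exists_submodule_le_finrank_eq (LinearMap.ker φ) d_le
  exact ⟨⟨A, finrank_A⟩, fun v hv => A_le hv⟩

theorem Wk_pos (hsum : Summable fun A : {A : Gr d n // perp k A} => w k A.1 ^ 2)
    {A : Gr d n} (hA : perp k A) (hwA : w k A ≠ 0) : 0 < Wk w k :=
  hsum.tsum_pos (fun _ => sq_nonneg _) ⟨A, hA⟩ (sq_pos_of_ne_zero hwA)

theorem radonC_of_perp {A : Gr d n} (hA : perp k A) (c : Zn n → ℂ) : radonC A c k = c k :=
  if_pos hA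

/-- When `∑ w(k,A)²` diverges, both sides take the junk value `0` of `tsum`. -/
theorem radonStar_radonC (w : Zn n → Gr d n → ℝ) (c : Zn n → ℂ) (k : Zn n) :
    radonStar w (fun A => radonC A c) k = (Wk w k : ℂ) * c k :=
  calc
    radonStar w (fun A => radonC A c) k
      = ∑' A : {A : Gr d n // perp k A}, (w k A.1 : ℂ) ^ 2 * c k :=
        tsum_congr fun A => congrArg _ (radonC_of_perp A.2 c)
    _ = (∑' A : {A : Gr d n // perp k A}, (w k A.1 : ℂ) ^ 2) * c k := tsum_mul_right
    _ = (Wk w k : ℂ) * c k := by simp only [Wk, Complex.ofReal_tsum, Complex.ofReal_pow]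

theorem inv_Wk_mul_radonStar_radonC (hWk : Wk w k ≠ 0) (c : Zn n → ℂ) :
    (((Wk w k)⁻¹ : ℝ) : ℂ) * radonStar w (fun A => radonC A c) k = c k := by
  rw [radonStar_radonC, Complex.ofReal_inv,
    inv_mul_cancel_left₀ (Complex.ofReal_ne_zero.mpr hWk)]

end Radon

theorem statement1_general {n d : ℕ} (hd : d ≤ n - 1) (w : Zn n → Gr d n → ℝ)
    (hw : ∀ k A, w k A ≠ 0)
    (hWsum : ∀ k : Zn n, Summable (fun A : {A : Gr d n // perp k A} => (w k A.1) ^ 2)) :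
    (∀ (c : Zn n → ℂ) (k : Zn n),
        radonStar w (fun A => radonC A c) k = ((Wk w k : ℝ) : ℂ) * c k) ∧
    (∀ c : Zn n → ℂ,
        (fun k : Zn n => (((Wk w k)⁻¹ : ℝ) : ℂ) * radonStar w (fun A => radonC A c) k) = c) := by
  refine ⟨radonStar_radonC w, fun c => funext fun k => ?_⟩
  obtain ⟨A, hA⟩ := exists_perp hd k
  exact inv_Wk_mul_radonStar_radonC (Wk_pos (hWsum k) hA (hw k A)).ne' c

/-- Normal operator.
If `W_k = Σ_{A∈Ω_k} w(k,A)² ≤ C_w²` for all `k`, then the normal operator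
`R_d^* R_d` on `H^s(𝕋ⁿ)` is the Fourier multiplier with symbol `(W_k)`:
`(R_d^* R_d f)^(k) = W_k f̂(k)`; in particular `F_{W_k⁻¹} ∘ R_d^*` is a left
inverse of `R_d` on all periodic distributions. -/
theorem statement1 {n d : ℕ} (hn : 2 ≤ n) (hd1 : 1 ≤ d) (hd2 : d ≤ n - 1)
    (s : ℝ) (w : Zn n → Gr d n → ℝ) (hw : IsWeight w) (Cw : ℝ) (hCw : 0 < Cw)
    (hWsum : ∀ k : Zn n, Summable (fun A : {A : Gr d n // perp k A} => (w k A.1) ^ 2))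
    (hWle : ∀ k : Zn n, Wk w k ≤ Cw ^ 2) :
    (∀ f : PDist n, hsNormSq s f.coef < ∞ → ∀ k : Zn n,
        radonStar w (fun A => (radonD A f).coef) k = ((Wk w k : ℝ) : ℂ) * f.coef k) ∧
    (∀ f : PDist n,
        (fun k : Zn n => (((Wk w k)⁻¹ : ℝ) : ℂ) * radonStar w (fun A => (radonD A f).coef) k)
          = f.coef) := by
  have general := statement1_general hd2 w (fun k A => (hw.1 k A).ne') hWsum
  exact ⟨fun f _ => general.1 f.coef, fun f => general.2 f.coef⟩
end
end

section
/- Let n ≥ 2 and 1 ≤ d ≤ n−1 be integers, s ∈ ℝ, and let w be a weight such that there exist c_w, C_w > 0 with c_w² ≤ W_k = Σ_{A∈Ω_k} w(k,A)² ≤ C_w² for every k ∈ ℤ^n. Then the operator F_{W_k^{−1}} ∘ R_d^* : L_s^{2,2}(X_{d,n};w) → H^s(𝕋^n) is (1/c_w)-Lipschitz: for every g ∈ L_s^{2,2}(X_{d,n};w) one has ‖F_{W_k^{−1}} R_d^* g‖_{H^s(𝕋^n)} ≤ (1/c_w) ‖g‖_{L_s^{2,2}(X_{d,n};w)}. -/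
/-!
Setting: the flat torus 𝕋ⁿ = ℝⁿ/ℤⁿ and its d-plane Radon transform.

* Periodic distributions 𝒯' are modeled, via the structure theorem, by their
  Fourier coefficient sequences `ℤⁿ → ℂ` of at most polynomial growth (`PDist`).
* `Gr d n` is the Grassmannian of d-dimensional subspaces of ℚⁿ.
* The d-plane Radon transform is encoded on the Fourier side by the Fourier
  slice identity `(R_{d,A} f)^(k) = f̂(k)` if `k ⊥ A` and `0` otherwise (`radonC`).
* `hsNormSq s c = Σ_k ⟨k⟩^{2s} |c k|²` is the squared H^s(𝕋ⁿ) norm (in ℝ≥0∞),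
  `dataNormSq s w g = Σ_A Σ_k ⟨k⟩^{2s} w(k,A)² |ĝ(k,A)|²` is the squared
  L_s^{2,2}(X_{d,n}; w) norm, `hsNorm`/`dataNorm` are their square roots.
* `Wk w k = Σ_{A ∈ Ω_k} w(k,A)²` and `radonStar` is the adjoint
  `(R_d^* g)^(k) = Σ_{A ∈ Ω_k} w(k,A)² ĝ(k,A)`.
-/

open scoped ENNReal BigOperators
open MeasureTheory Classical Filter

noncomputable section

/-!
By Cauchy–Schwarz for the measure `A ↦ w(k,A)²` on `Ω_k`, of total mass `W_k`, the `k`-th Fourier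
coefficient satisfies `|(R_d^* g)^(k)|² ≤ W_k Σ_A w(k,A)² |ĝ(k,A)|²`. Multiplication by `W_k⁻¹`
turns the factor `W_k` into `W_k⁻¹ ≤ c_w⁻²`, and summing against `⟨k⟩^{2s}` gives the bound.
-/

theorem tsum_mul_le_weight_mul_Lp {ι : Type*} {p : ℝ} (hp : 1 ≤ p) (a f : ι → ℝ≥0∞) :
    ∑' i, a i * f i ≤ (∑' i, a i) ^ (1 - p⁻¹) * (∑' i, a i * f i ^ p) ^ p⁻¹ := by
  have exponent_nonneg : 0 ≤ 1 - p⁻¹ := sub_nonneg.2 (inv_le_one_of_one_le₀ hp)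
  rw [ENNReal.tsum_eq_iSup_sum]
  refine iSup_le fun t => (ENNReal.inner_le_weight_mul_Lp_of_nonneg t hp a f).trans ?_
  gcongr
  · exact ENNReal.sum_le_tsum t
  · exact ENNReal.sum_le_tsum t

theorem sq_tsum_mul_le_tsum_mul_tsum_mul_sq {ι : Type*} (a f : ι → ℝ≥0∞) :
    (∑' i, a i * f i) ^ 2 ≤ (∑' i, a i) * ∑' i, a i * f i ^ 2 := by
  have holder := tsum_mul_le_weight_mul_Lp one_le_two a f
  rw [show (1 - 2⁻¹ : ℝ) = 2⁻¹ by norm_num, ← ENNReal.mul_rpow_of_nonneg _ _ (by norm_num),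
    ENNReal.le_rpow_inv_iff two_pos] at holder
  simpa only [ENNReal.rpow_ofNat] using holder

/-- When the series on the left diverges, its `tsum` is the junk value `0`; if the right-hand side
is finite, the series converges absolutely in complete `E`. -/
theorem sq_enorm_tsum_smul_le {ι 𝕜 E : Type*} [NormedRing 𝕜] [NormedAddCommGroup E] [Module 𝕜 E]
    [IsBoundedSMul 𝕜 E] (a : ι → 𝕜) (f : ι → E) :
    ‖∑' i, a i • f i‖ₑ ^ 2 ≤ (∑' i, ‖a i‖ₑ) * ∑' i, ‖a i‖ₑ * ‖f i‖ₑ ^ 2 := by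
  calc ‖∑' i, a i • f i‖ₑ ^ 2
      ≤ (∑' i, ‖a i • f i‖ₑ) ^ 2 := by gcongr; exact enorm_tsum_le_tsum_enorm
    _ ≤ (∑' i, ‖a i‖ₑ * ‖f i‖ₑ) ^ 2 := by gcongr; exact enorm_smul_le
    _ ≤ (∑' i, ‖a i‖ₑ) * ∑' i, ‖a i‖ₑ * ‖f i‖ₑ ^ 2 := sq_tsum_mul_le_tsum_mul_tsum_mul_sq _ _

theorem enorm_complex_ofReal (x : ℝ) : ‖(x : ℂ)‖ₑ = ‖x‖ₑ := by
  rw [← ofReal_norm, Complex.norm_real, ofReal_norm]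

theorem enorm_inv_le_ofReal_one_div_sq {c x : ℝ} (hc : 0 < c) (hx : c ^ 2 ≤ x) :
    ‖x⁻¹‖ₑ ≤ ENNReal.ofReal (1 / c) ^ 2 := by
  have hx_pos : 0 < x := (pow_pos hc 2).trans_le hx
  rw [Real.enorm_of_nonneg (inv_nonneg.2 hx_pos.le), ← ENNReal.ofReal_pow (by positivity),
    one_div, inv_pow]
  gcongr

theorem jap_nonneg {n : ℕ} (k : Zn n) : 0 ≤ jap k :=
  Real.sqrt_nonneg _

theorem hsNormSq_eq_tsum_enorm {n : ℕ} (s : ℝ) (c : Zn n → ℂ) :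
    hsNormSq s c = ∑' k, ENNReal.ofReal (jap k ^ (2 * s)) * ‖c k‖ₑ ^ 2 := by
  refine tsum_congr fun k => ?_
  rw [ENNReal.ofReal_mul (Real.rpow_nonneg (jap_nonneg k) _), ENNReal.ofReal_pow (norm_nonneg _),
    ofReal_norm]

section RadonData

variable {d n : ℕ} {w : Zn n → Gr d n → ℝ} {g : Gr d n → Zn n → ℂ} {k : Zn n}

/-- The squared norm `Σ_A w(k,A)² |ĝ(k,A)|²` of the Fourier coefficients of the data `g` at the
frequency `k`, taken over the whole Grassmannian and not only over `Ω_k`. -/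
def freqNormSq (w : Zn n → Gr d n → ℝ) (g : Gr d n → Zn n → ℂ) (k : Zn n) : ℝ≥0∞ :=
  ∑' A : Gr d n, ‖w k A‖ₑ ^ 2 * ‖g A k‖ₑ ^ 2

theorem dataNormSq_eq_tsum_freqNormSq (s : ℝ) (w : Zn n → Gr d n → ℝ) (g : Gr d n → Zn n → ℂ) :
    dataNormSq s w g = ∑' k, ENNReal.ofReal (jap k ^ (2 * s)) * freqNormSq w g k := by
  unfold dataNormSq freqNormSq
  rw [ENNReal.tsum_comm]
  refine tsum_congr fun k => ?_
  rw [← ENNReal.tsum_mul_left]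
  refine tsum_congr fun A => ?_
  rw [mul_assoc, ENNReal.ofReal_mul (Real.rpow_nonneg (jap_nonneg k) _),
    ENNReal.ofReal_mul (sq_nonneg _), ENNReal.ofReal_pow (norm_nonneg _), ofReal_norm,
    ← Real.enorm_of_nonneg (sq_nonneg (w k A)), enorm_pow]

theorem hsNorm_le_mul_dataNorm (s : ℝ) {c : Zn n → ℂ} {C : ℝ≥0∞}
    (hc : ∀ k, ‖c k‖ₑ ^ 2 ≤ C ^ 2 * freqNormSq w g k) :
    hsNorm s c ≤ C * dataNorm s w g := by
  have hsq : hsNormSq s c ≤ C ^ 2 * dataNormSq s w g := by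
    rw [hsNormSq_eq_tsum_enorm, dataNormSq_eq_tsum_freqNormSq, ← ENNReal.tsum_mul_left]
    refine ENNReal.tsum_le_tsum fun k => ?_
    rw [mul_left_comm]
    gcongr
    exact hc k
  calc hsNorm s c
      ≤ (C ^ 2 * dataNormSq s w g) ^ (1 / 2 : ℝ) := ENNReal.rpow_le_rpow hsq (by norm_num)
    _ = C * dataNorm s w g := by
      rw [ENNReal.mul_rpow_of_nonneg _ _ (by norm_num), ← ENNReal.rpow_natCast_mul, dataNorm]
      norm_num

theorem enorm_Wk (hsum : Summable fun A : {A : Gr d n // perp k A} => w k A.1 ^ 2) :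
    ‖Wk w k‖ₑ = ∑' A : {A : Gr d n // perp k A}, ‖w k A.1‖ₑ ^ 2 := by
  rw [Wk, Real.enorm_of_nonneg (tsum_nonneg fun _ => sq_nonneg _),
    ENNReal.ofReal_tsum_of_nonneg (fun _ => sq_nonneg _) hsum]
  refine tsum_congr fun A => ?_
  rw [← Real.enorm_of_nonneg (sq_nonneg _), enorm_pow]

theorem sq_enorm_radonStar_le
    (hsum : Summable fun A : {A : Gr d n // perp k A} => w k A.1 ^ 2) :
    ‖radonStar w g k‖ₑ ^ 2 ≤ ‖Wk w k‖ₑ * freqNormSq w g k := by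
  have enorm_sq_weight (A : Gr d n) : ‖(w k A : ℂ) ^ 2‖ₑ = ‖w k A‖ₑ ^ 2 := by
    rw [enorm_pow, enorm_complex_ofReal]
  have cauchy_schwarz := sq_enorm_tsum_smul_le
    (fun A : {A : Gr d n // perp k A} => (w k A.1 : ℂ) ^ 2) (fun A => g A.1 k)
  simp only [smul_eq_mul, enorm_sq_weight, ← enorm_Wk hsum] at cauchy_schwarz
  refine cauchy_schwarz.trans ?_
  gcongr
  exact ENNReal.tsum_comp_le_tsum_of_injective Subtype.val_injective
    fun A => ‖w k A‖ₑ ^ 2 * ‖g A k‖ₑ ^ 2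

theorem sq_enorm_inv_Wk_mul_radonStar_le
    (hsum : Summable fun A : {A : Gr d n // perp k A} => w k A.1 ^ 2) :
    ‖(((Wk w k)⁻¹ : ℝ) : ℂ) * radonStar w g k‖ₑ ^ 2 ≤ ‖(Wk w k)⁻¹‖ₑ * freqNormSq w g k := by
  have inv_sq_mul_self : (Wk w k)⁻¹ ^ 2 * Wk w k = (Wk w k)⁻¹ := by
    simpa only [pow_two, inv_inv] using mul_self_mul_inv (Wk w k)⁻¹
  calc ‖(((Wk w k)⁻¹ : ℝ) : ℂ) * radonStar w g k‖ₑ ^ 2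
      = ‖(Wk w k)⁻¹‖ₑ ^ 2 * ‖radonStar w g k‖ₑ ^ 2 := by
        rw [enorm_mul, mul_pow, enorm_complex_ofReal]
    _ ≤ ‖(Wk w k)⁻¹‖ₑ ^ 2 * (‖Wk w k‖ₑ * freqNormSq w g k) := by
        gcongr; exact sq_enorm_radonStar_le hsum
    _ = ‖(Wk w k)⁻¹ ^ 2 * Wk w k‖ₑ * freqNormSq w g k := by
        rw [enorm_mul, enorm_pow, mul_assoc]
    _ = ‖(Wk w k)⁻¹‖ₑ * freqNormSq w g k := by
        rw [inv_sq_mul_self]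

end RadonData

theorem statement2_general {n d : ℕ} (s : ℝ) (w : Zn n → Gr d n → ℝ) {cw : ℝ} (hcw : 0 < cw)
    (hWsum : ∀ k : Zn n, Summable (fun A : {A : Gr d n // perp k A} => (w k A.1) ^ 2))
    (hWlb : ∀ k : Zn n, cw ^ 2 ≤ Wk w k) (g : Gr d n → Zn n → ℂ) :
    hsNorm s (fun k : Zn n => (((Wk w k)⁻¹ : ℝ) : ℂ) * radonStar w g k)
      ≤ ENNReal.ofReal (1 / cw) * dataNorm s w g := by
  refine hsNorm_le_mul_dataNorm s fun k => ?_
  refine (sq_enorm_inv_Wk_mul_radonStar_le (hWsum k)).trans ?_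
  gcongr
  exact enorm_inv_le_ofReal_one_div_sq hcw (hWlb k)

/-- Lipschitz bound for `F_{W_k⁻¹} ∘ R_d^*`.
If `c_w² ≤ W_k ≤ C_w²` for all `k`, then
`‖F_{W_k⁻¹} R_d^* g‖_{H^s(𝕋ⁿ)} ≤ (1/c_w) ‖g‖_{L_s^{2,2}(X_{d,n};w)}`
for every `g ∈ L_s^{2,2}(X_{d,n};w)`. -/
theorem statement2 {n d : ℕ} (hn : 2 ≤ n) (hd1 : 1 ≤ d) (hd2 : d ≤ n - 1)
    (s : ℝ) (w : Zn n → Gr d n → ℝ) (hw : IsWeight w) (cw Cw : ℝ) (hcw : 0 < cw) (hCw : 0 < Cw)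
    (hWsum : ∀ k : Zn n, Summable (fun A : {A : Gr d n // perp k A} => (w k A.1) ^ 2))
    (hWlb : ∀ k : Zn n, cw ^ 2 ≤ Wk w k) (hWub : ∀ k : Zn n, Wk w k ≤ Cw ^ 2) :
    ∀ g : Gr d n → PDist n, dataNormSq s w (fun A => (g A).coef) < ∞ →
      hsNorm s (fun k : Zn n =>
          (((Wk w k)⁻¹ : ℝ) : ℂ) * radonStar w (fun A => (g A).coef) k)
        ≤ ENNReal.ofReal (1 / cw) * dataNorm s w (fun A => (g A).coef) :=
  fun g _ => statement2_general s w hcw hWsum hWlb fun A => (g A).coef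
end
end

section
/- Let n ≥ 2 and 1 ≤ d ≤ n−1 be integers, s ∈ ℝ, and let w be a weight such that there exist c_w, C_w > 0 with c_w² ≤ W_k = Σ_{A∈Ω_k} w(k,A)² ≤ C_w² for every k ∈ ℤ^n. Then for every periodic distribution f ∈ 𝒯' one has the stability estimate ‖f‖_{H^s(𝕋^n)} ≤ (1/c_w) ‖R_d f‖_{L_s^{2,2}(X_{d,n};w)}. -/
/-!
Setting: the flat torus 𝕋ⁿ = ℝⁿ/ℤⁿ and its d-plane Radon transform.

* Periodic distributions 𝒯' are modeled, via the structure theorem, by their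
  Fourier coefficient sequences `ℤⁿ → ℂ` of at most polynomial growth (`PDist`).
* `Gr d n` is the Grassmannian of d-dimensional subspaces of ℚⁿ.
* The d-plane Radon transform is encoded on the Fourier side by the Fourier
  slice identity `(R_{d,A} f)^(k) = f̂(k)` if `k ⊥ A` and `0` otherwise (`radonC`).
* `hsNormSq s c = Σ_k ⟨k⟩^{2s} |c k|²` is the squared H^s(𝕋ⁿ) norm (in ℝ≥0∞),
  `dataNormSq s w g = Σ_A Σ_k ⟨k⟩^{2s} w(k,A)² |ĝ(k,A)|²` is the squared
  L_s^{2,2}(X_{d,n}; w) norm, `hsNorm`/`dataNorm` are their square roots.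
* `Wk w k = Σ_{A ∈ Ω_k} w(k,A)²` and `radonStar` is the adjoint
  `(R_d^* g)^(k) = Σ_{A ∈ Ω_k} w(k,A)² ĝ(k,A)`.
-/

open scoped ENNReal BigOperators
open MeasureTheory Classical Filter

noncomputable section

/-!
By Tonelli and the Fourier slice identity, summing over the planes first turns the squared data
norm of `R_d f` into `Σ_k W_k ⟨k⟩^{2s} |f̂(k)|²`: the frequency `k` is seen exactly by the planes in
`Ω_k`. A lower bound on `W_k` therefore bounds this sum from below by a multiple of `‖f‖²_{H^s}`.
-/

lemma rpow_one_div_le_inv_mul_of_rpow_mul_le {a x y : ℝ≥0∞} {p : ℝ} (hp : 0 < p) (ha₀ : a ≠ 0)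
    (ha : a ≠ ∞) (h : a ^ p * x ≤ y) : x ^ (1 / p) ≤ a⁻¹ * y ^ (1 / p) := by
  rw [← ENNReal.mul_le_iff_le_inv ha₀ ha]
  calc a * x ^ (1 / p) = (a ^ p * x) ^ (1 / p) := by
        rw [ENNReal.mul_rpow_of_nonneg _ _ (by positivity), one_div, ENNReal.rpow_rpow_inv hp.ne']
    _ ≤ y ^ (1 / p) := by gcongr

section RadonTransform

variable {n d : ℕ}

/-- The sum `W_k = Σ_{A ∈ Ω_k} w(k,A)²` of the squared weights of the planes orthogonal to `k`,
with values in `[0, ∞]`. Unlike the real-valued `Wk`, which is `0` when the series diverges, it is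
then `∞`. -/
def extWk (w : Zn n → Gr d n → ℝ) (k : Zn n) : ℝ≥0∞ :=
  ∑' A : {A : Gr d n // perp k A}, ENNReal.ofReal (w k A.1 ^ 2)

lemma ofReal_Wk {w : Zn n → Gr d n → ℝ} {k : Zn n}
    (hsum : Summable fun A : {A : Gr d n // perp k A} => w k A.1 ^ 2) :
    ENNReal.ofReal (Wk w k) = extWk w k :=
  ENNReal.ofReal_tsum_of_nonneg (fun _ => sq_nonneg _) hsum

lemma tsum_ofReal_mul_norm_radonC_sq (s : ℝ) (w : Zn n → Gr d n → ℝ) (c : Zn n → ℂ) (k : Zn n) :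
    ∑' A : Gr d n, ENNReal.ofReal (jap k ^ (2 * s) * w k A ^ 2 * ‖radonC A c k‖ ^ 2) =
      extWk w k * ENNReal.ofReal (jap k ^ (2 * s) * ‖c k‖ ^ 2) := by
  have slice (A : Gr d n) :
      ENNReal.ofReal (jap k ^ (2 * s) * w k A ^ 2 * ‖radonC A c k‖ ^ 2) =
        {A | perp k A}.indicator (fun A => ENNReal.ofReal (w k A ^ 2)) A *
          ENNReal.ofReal (jap k ^ (2 * s) * ‖c k‖ ^ 2) := by
    by_cases hkA : perp k A
    · simp only [radonC, if_pos hkA, Set.indicator, Set.mem_ofPred_eq]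
      rw [← ENNReal.ofReal_mul (sq_nonneg _)]
      ring_nf
    · simp [radonC, hkA]
  rw [tsum_congr slice, ENNReal.tsum_mul_right, ← tsum_subtype]
  rfl

theorem dataNormSq_radonC (s : ℝ) (w : Zn n → Gr d n → ℝ) (c : Zn n → ℂ) :
    dataNormSq s w (fun A => radonC A c) =
      ∑' k, extWk w k * ENNReal.ofReal (jap k ^ (2 * s) * ‖c k‖ ^ 2) := by
  rw [dataNormSq, ENNReal.tsum_comm]
  exact tsum_congr (tsum_ofReal_mul_norm_radonC_sq s w c)

theorem mul_hsNormSq_le_dataNormSq_radonC (s : ℝ) {w : Zn n → Gr d n → ℝ} {a : ℝ≥0∞}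
    (ha : ∀ k, a ≤ extWk w k) (c : Zn n → ℂ) :
    a * hsNormSq s c ≤ dataNormSq s w (fun A => radonC A c) := by
  rw [dataNormSq_radonC, hsNormSq, ← ENNReal.tsum_mul_left]
  gcongr with k
  exact ha k

theorem statement3_general (s : ℝ) {w : Zn n → Gr d n → ℝ} {cw : ℝ} (hcw : 0 < cw)
    (hW : ∀ k, ENNReal.ofReal (cw ^ 2) ≤ extWk w k) (c : Zn n → ℂ) :
    hsNorm s c ≤ ENNReal.ofReal (1 / cw) * dataNorm s w (fun A => radonC A c) := by
  rw [one_div, ENNReal.ofReal_inv_of_pos hcw]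
  refine rpow_one_div_le_inv_mul_of_rpow_mul_le two_pos (ENNReal.ofReal_pos.2 hcw).ne'
    ENNReal.ofReal_ne_top ?_
  rw [ENNReal.rpow_two, ← ENNReal.ofReal_pow hcw.le]
  exact mul_hsNormSq_le_dataNormSq_radonC s hW c

end RadonTransform

/-- Stability estimate.
If `c_w² ≤ W_k ≤ C_w²` for all `k`, then every periodic distribution `f ∈ 𝒯'`
satisfies `‖f‖_{H^s(𝕋ⁿ)} ≤ (1/c_w) ‖R_d f‖_{L_s^{2,2}(X_{d,n};w)}`
(both sides possibly infinite). -/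
theorem statement3 {n d : ℕ} (hn : 2 ≤ n) (hd1 : 1 ≤ d) (hd2 : d ≤ n - 1)
    (s : ℝ) (w : Zn n → Gr d n → ℝ) (hw : IsWeight w) (cw Cw : ℝ) (hcw : 0 < cw) (hCw : 0 < Cw)
    (hWsum : ∀ k : Zn n, Summable (fun A : {A : Gr d n // perp k A} => (w k A.1) ^ 2))
    (hWlb : ∀ k : Zn n, cw ^ 2 ≤ Wk w k) (hWub : ∀ k : Zn n, Wk w k ≤ Cw ^ 2) :
    ∀ f : PDist n,
      hsNorm s f.coef ≤ ENNReal.ofReal (1 / cw) * dataNorm s w (fun A => radonC A f.coef) :=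
  fun f => statement3_general s hcw
    (fun k => (ENNReal.ofReal_le_ofReal (hWlb k)).trans_eq (ofReal_Wk (hWsum k))) f.coef
end
end
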